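/- Let A, B ⊆ E be closed subsets with A ⊆ B. Then the rigid loci satisfy R_A ⊆ R_B. (Monotonicity of the rigid locus with respect to inclusions.) -/

import Mathlib

/-!
Let `p ∈ R_A` and `φ ∈ Σ̄_B`, and suppose `φ p ∉ B`. As `φ` is continuous and `B` is closed, `φ`
moves a ball `U` around `p` off `B`. Writing `θ = ψ⁻¹ φ` with `ψ ∈ Σ_B` close to `φ`, the ball `U`
is moved off `B`, hence off `A`, by maps `θ` of arbitrarily small Hofer norm. It follows that every
point of the space lies in `A` (`mem_of_ball_displaceable`), in particular `φ p ∈ A ⊆ B`, a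
contradiction. The nondegeneracy of the Hofer norm is not needed:

* A Hamiltonian diffeomorphism `f` supported in `U` is a Hofer limit of the maps `θ f θ⁻¹`, which
  fix `A` pointwise, so `f ∈ Σ̄_A` and `f p ∈ A` (`mem_of_displaceable`). Since some such `f` sends
  `p` to any prescribed nearby point, `A` contains a smaller ball `V` around `p`.
* Then `θ` displaces `V` from itself, so the commutator of two maps supported in `V` has Hofer norm
  zero (`commutator_hoferLT`), by the classical trick of replacing `g` by `g θ g⁻¹ θ⁻¹`.
* A suitable such commutator moves `p`. Conjugating it by a symplectomorphism that fixes `p` gives a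
  map of Hofer norm zero which sends `p` to any given point `x₀ ≠ p`. Maps of norm zero lie in
  `Σ̄_A`, so `x₀ ∈ A` (`mem_of_hoferLT_all`).

The supporting facts are the group structure of `Ham(E)` and the subadditivity, symmetry and
conjugation invariance of the Hofer norm (`HoferLT.mul`, `HoferLT.inv`, `HoferLT.conj`), and the
existence of compactly supported Hamiltonian diffeomorphisms exchanging two points
(`exists_swap_map`), obtained by rotating spheres about the midpoint.
-/

open scoped ENNReal Topology

noncomputable section

/-- The standard symplectic vector space `E = ℝⁿ × ℝⁿ`. -/
abbrev E (n : ℕ) := (Fin n → ℝ) × (Fin n → ℝ)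

/-- The standard symplectic form `ω₀((x,y),(x',y')) = ⟨x,y'⟩ − ⟨y,x'⟩`. -/
def omega0 (n : ℕ) (z w : E n) : ℝ :=
  (∑ i, z.1 i * w.2 i) - ∑ i, z.2 i * w.1 i

/-- The Hamiltonian vector field `X_{H_t}(x,y) = (∂_y H(t,x,y), −∂_x H(t,x,y))`. -/
def XH (n : ℕ) (H : ℝ × E n → ℝ) (t : ℝ) (z : E n) : E n :=
  ((fun i => fderiv ℝ (fun w => H (t, w)) z (0, Pi.single i 1)),
   (fun i => -fderiv ℝ (fun w => H (t, w)) z (Pi.single i 1, 0)))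

/-- `Φ` is the Hamiltonian flow of `H`: `Φ 0 = id` and `(d/dt) Φ t z = X_{H_t} (Φ t z)`. -/
def IsHamFlow (n : ℕ) (H : ℝ × E n → ℝ) (Φ : ℝ → E n → E n) : Prop :=
  (∀ z, Φ 0 z = z) ∧ ∀ z t, HasDerivAt (fun s => Φ s z) (XH n H t (Φ t z)) t

/-- `H : ℝ × E → ℝ` is smooth with support a compact subset of `[0,1] × W`. -/
def AdmissibleH (n : ℕ) (W : Set (E n)) (H : ℝ × E n → ℝ) : Prop :=
  ContDiff ℝ (⊤ : ℕ∞) H ∧ IsCompact (tsupport H) ∧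
    tsupport H ⊆ Set.Icc (0 : ℝ) 1 ×ˢ W

/-- `Ham(W)`: time-one maps of Hamiltonian flows of admissible Hamiltonians. -/
def HamGrp (n : ℕ) (W : Set (E n)) : Set (E n → E n) :=
  {φ | ∃ H Φ, AdmissibleH n W H ∧ IsHamFlow n H Φ ∧ φ = Φ 1}

/-- `‖H‖ = ∫₀¹ (sup H(t,·) − inf H(t,·)) dt`. -/
def HNorm (n : ℕ) (H : ℝ × E n → ℝ) : ℝ :=
  ∫ t in (0:ℝ)..(1:ℝ),
    (sSup (Set.range fun z => H (t, z)) - sInf (Set.range fun z => H (t, z)))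

/-- The Hofer norm `‖φ‖_W` of `φ ∈ Ham(W)`. -/
def hoferNorm (n : ℕ) (W : Set (E n)) (φ : E n → E n) : ℝ :=
  sInf {c | ∃ H Φ, AdmissibleH n W H ∧ IsHamFlow n H Φ ∧ φ = Φ 1 ∧ c = HNorm n H}

/-- The displacement energy `e_W(U,N)`, valued in `ℝ≥0∞` (so `inf ∅ = ⊤`).
`closure U ∩ W` is the closure of `U` in `W`. -/
def dispE (n : ℕ) (W U N : Set (E n)) : ℝ≥0∞ :=
  sInf {c | ∃ φ ∈ HamGrp n W, φ '' (closure U ∩ W) ∩ N = ∅ ∧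
    c = ENNReal.ofReal (hoferNorm n W φ)}

/-- `p` is rigid with respect to `N` in `W`. -/
def RigidWrt (n : ℕ) (W N : Set (E n)) (p : E n) : Prop :=
  ∀ U : Set (E n), IsOpen U → p ∈ U → U ⊆ W → 0 < dispE n W U N

/-- `N` is a subset of `W` which is closed as a subset of `W`. -/
def ClosedIn (n : ℕ) (W N : Set (E n)) : Prop :=
  N ⊆ W ∧ closure N ∩ W ⊆ N

/-- `N` is locally closed. -/
def LocallyClosedSet (n : ℕ) (N : Set (E n)) : Prop :=
  ∀ q ∈ N, ∃ V : Set (E n), IsOpen V ∧ q ∈ V ∧ ClosedIn n V (N ∩ V)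

/-- `p` is locally rigid with respect to `N`. -/
def LocRigid (n : ℕ) (N : Set (E n)) (p : E n) : Prop :=
  ∃ W : Set (E n), IsOpen W ∧ p ∈ W ∧ ClosedIn n W (N ∩ W) ∧
    RigidWrt n W (N ∩ W) p

/-- `ψ` is a symplectomorphism from the open set `W` onto its (open) image. -/
def IsSymplecto (n : ℕ) (W : Set (E n)) (ψ : E n → E n) : Prop :=
  IsOpen W ∧ IsOpen (ψ '' W) ∧ Set.InjOn ψ W ∧ ContDiffOn ℝ (⊤ : ℕ∞) ψ W ∧
  (∃ g : E n → E n, ContDiffOn ℝ (⊤ : ℕ∞) g (ψ '' W) ∧ ∀ z ∈ W, g (ψ z) = z) ∧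
  ∀ z ∈ W, ∀ u v, omega0 n (fderiv ℝ ψ z u) (fderiv ℝ ψ z v) = omega0 n u v

/-- `ψ` is a symplectic homeomorphism of `E`: a homeomorphism which is a `C⁰`-limit
(uniformly on compact sets, together with inverses) of symplectomorphisms of `E` onto `E`. -/
def IsSympHomeo (n : ℕ) (ψ : E n ≃ₜ E n) : Prop :=
  ∃ Ψ : ℕ → E n ≃ E n,
    (∀ m, IsSymplecto n Set.univ (Ψ m)) ∧
    TendstoLocallyUniformly (fun m z => Ψ m z) (fun z => ψ z) Filter.atTop ∧
    TendstoLocallyUniformly (fun m z => (Ψ m).symm z) (fun z => ψ.symm z) Filter.atTop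

/-- A fixed `k`-dimensional coordinate subspace `ℝᵏ × {0}` of `E`. -/
def coordSubspace (n k : ℕ) : Set (E n) :=
  {z | (∀ i : Fin n, k ≤ (i : ℕ) → z.1 i = 0) ∧
       (∀ i : Fin n, k ≤ n + (i : ℕ) → z.2 i = 0)}

/-- `N` is a smooth `k`-dimensional submanifold of `E`. -/
def IsSubmanifold (n k : ℕ) (N : Set (E n)) : Prop :=
  ∀ p ∈ N, ∃ (V : Set (E n)) (Φ : E n → E n),
    IsOpen V ∧ p ∈ V ∧ IsOpen (Φ '' V) ∧ Set.InjOn Φ V ∧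
    ContDiffOn ℝ (⊤ : ℕ∞) Φ V ∧
    (∃ g : E n → E n, ContDiffOn ℝ (⊤ : ℕ∞) g (Φ '' V) ∧ ∀ z ∈ V, g (Φ z) = z) ∧
    Φ '' (N ∩ V) = coordSubspace n k ∩ Φ '' V

/-- The tangent space `T_pN`, as velocities of curves through `p` lying locally in `N`. -/
def TangentSet (n : ℕ) (N : Set (E n)) (p : E n) : Set (E n) :=
  {v | ∃ γ : ℝ → E n, γ 0 = p ∧ (∀ᶠ t in 𝓝 (0:ℝ), γ t ∈ N) ∧ HasDerivAt γ v 0}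

/-- The symplectic orthogonal complement `T^{ω₀}`. -/
def symplOrth (n : ℕ) (T : Set (E n)) : Set (E n) :=
  {v | ∀ u ∈ T, omega0 n v u = 0}

/-- `N` is coisotropic: `(T_pN)^{ω₀} ⊆ T_pN` for all `p ∈ N`. -/
def IsCoisotropic (n : ℕ) (N : Set (E n)) : Prop :=
  ∀ p ∈ N, symplOrth n (TangentSet n N p) ⊆ TangentSet n N p

/-- `N` is Lagrangian: `(T_pN)^{ω₀} = T_pN` for all `p ∈ N`. -/
def IsLagrangian (n : ℕ) (N : Set (E n)) : Prop :=
  ∀ p ∈ N, symplOrth n (TangentSet n N p) = TangentSet n N p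

/-- `Σ_N`: Hamiltonian diffeomorphisms preserving `N`. -/
def SigmaGrp (n : ℕ) (N : Set (E n)) : Set (E n → E n) :=
  {φ | φ ∈ HamGrp n Set.univ ∧ φ '' N = N}

/-- `Σ̄_N`: the closure of `Σ_N` in the Hofer metric. -/
def SigmaBar (n : ℕ) (N : Set (E n)) : Set (E n → E n) :=
  {φ | φ ∈ HamGrp n Set.univ ∧ ∀ ε : ℝ, 0 < ε →
    ∃ ψ ∈ SigmaGrp n N, ∃ χ : E n → E n,
      Function.LeftInverse χ ψ ∧ Function.RightInverse χ ψ ∧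
      hoferNorm n Set.univ (χ ∘ φ) < ε}

/-- The rigid locus `R_N = ⋂_{φ ∈ Σ̄_N} φ⁻¹(N)`. -/
def rigidLocus (n : ℕ) (N : Set (E n)) : Set (E n) :=
  ⋂ φ ∈ SigmaBar n N, φ ⁻¹' N

open Set Filter Function
open scoped ContDiff NNReal

/-! ### Oscillation of a function -/

/-- The oscillation `sup f − inf f`, the integrand of the Hofer length. -/
def oscil {n : ℕ} (f : E n → ℝ) : ℝ := sSup (range f) - sInf (range f)

lemma oscil_nonneg {n : ℕ} (f : E n → ℝ) (ha : BddAbove (range f)) (hb : BddBelow (range f)) :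
    0 ≤ oscil f :=
  sub_nonneg.2 (csInf_le_csSup (range_nonempty f) hb ha)

lemma oscil_neg {n : ℕ} (f : E n → ℝ) : oscil (fun z => -f z) = oscil f := by
  have h : range (fun z => -f z) = -range f := by
    ext y; simp [neg_eq_iff_eq_neg]
  rw [oscil, oscil, h, Real.sInf_def (-range f), Real.sInf_def (range f), neg_neg]
  ring

lemma oscil_const_mul {n : ℕ} (f : E n → ℝ) {c : ℝ} (hc : 0 ≤ c) :
    oscil (fun z => c * f z) = c * oscil f := by
  have h1 := Real.mul_iSup_of_nonneg hc f
  have h2 := Real.mul_iInf_of_nonneg hc f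
  simp only [oscil, mul_sub]
  exact congrArg₂ (· - ·) h1.symm h2.symm

lemma oscil_zero {n : ℕ} : oscil (fun _ : E n => (0 : ℝ)) = 0 := by
  simp [oscil]

lemma oscil_comp_surj {n : ℕ} (f : E n → ℝ) {g : E n → E n} (hg : Surjective g) :
    oscil (fun z => f (g z)) = oscil f := by
  have : range (fun z => f (g z)) = range f := hg.range_comp f
  rw [oscil, oscil, this]

lemma abs_oscil_sub_le {n : ℕ} {f g : E n → ℝ} {ε : ℝ}
    (hfa : BddAbove (range f)) (hfb : BddBelow (range f))
    (hga : BddAbove (range g)) (hgb : BddBelow (range g))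
    (h : ∀ z, |f z - g z| ≤ ε) : |oscil f - oscil g| ≤ 2 * ε := by
  have a1 : sSup (range f) ≤ sSup (range g) + ε := by
    refine csSup_le (range_nonempty f) ?_
    rintro _ ⟨z, rfl⟩
    have := le_csSup hga ⟨z, rfl⟩
    linarith [(abs_le.1 (h z)).2]
  have a2 : sSup (range g) ≤ sSup (range f) + ε := by
    refine csSup_le (range_nonempty g) ?_
    rintro _ ⟨z, rfl⟩
    have := le_csSup hfa ⟨z, rfl⟩
    linarith [(abs_le.1 (h z)).1]
  have a3 : sInf (range g) - ε ≤ sInf (range f) := by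
    refine le_csInf (range_nonempty f) ?_
    rintro _ ⟨z, rfl⟩
    have := csInf_le hgb ⟨z, rfl⟩
    linarith [(abs_le.1 (h z)).1]
  have a4 : sInf (range f) - ε ≤ sInf (range g) := by
    refine le_csInf (range_nonempty g) ?_
    rintro _ ⟨z, rfl⟩
    have := csInf_le hfb ⟨z, rfl⟩
    linarith [(abs_le.1 (h z)).2]
  rw [oscil, oscil, abs_le]
  constructor <;> linarith

/-! ### Admissible Hamiltonians and their symplectic gradients -/

lemma HNorm_eq {n : ℕ} (H : ℝ × E n → ℝ) :
    HNorm n H = ∫ t in (0:ℝ)..1, oscil fun z => H (t, z) := rfl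

/-- The symplectic gradient of a function on `E`. -/
def sgrad {n : ℕ} (f : E n → ℝ) (z : E n) : E n :=
  ((fun i => fderiv ℝ f z (0, Pi.single i 1)), (fun i => -fderiv ℝ f z (Pi.single i 1, 0)))

lemma XH_eq {n : ℕ} (H : ℝ × E n → ℝ) (t : ℝ) (z : E n) :
    XH n H t z = sgrad (fun w => H (t, w)) z := rfl

lemma sgrad_const_mul {n : ℕ} {f : E n → ℝ} (hf : Differentiable ℝ f) (c : ℝ) (z : E n) :
    sgrad (fun w => c * f w) z = c • sgrad f z := by
  simp only [sgrad]
  rw [fderiv_const_mul (hf z)]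
  ext i <;> simp

lemma sgrad_neg {n : ℕ} (f : E n → ℝ) (z : E n) :
    sgrad (fun w => -f w) z = - sgrad f z := by
  simp only [sgrad]
  rw [fderiv_fun_neg]
  ext i <;> simp

lemma sgrad_zero {n : ℕ} (z : E n) : sgrad (fun _ : E n => (0 : ℝ)) z = 0 := by
  simp only [sgrad]
  rw [fderiv_fun_const]
  ext i <;> simp

lemma AdmissibleH.hasCompactSupport {n : ℕ} {H : ℝ × E n → ℝ}
    (h : AdmissibleH n univ H) : HasCompactSupport H := h.2.1

lemma AdmissibleH.slice_smooth {n : ℕ} {H : ℝ × E n → ℝ}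
    (h : AdmissibleH n univ H) (t : ℝ) : ContDiff ℝ ∞ fun z => H (t, z) :=
  h.1.comp (contDiff_const.prodMk contDiff_id)

lemma AdmissibleH.slice_differentiable {n : ℕ} {H : ℝ × E n → ℝ}
    (h : AdmissibleH n univ H) (t : ℝ) : Differentiable ℝ fun z => H (t, z) :=
  (h.slice_smooth t).differentiable (by simp)

lemma AdmissibleH.bdd {n : ℕ} {H : ℝ × E n → ℝ} (h : AdmissibleH n univ H) (t : ℝ) :
    BddAbove (range fun z => H (t, z)) ∧ BddBelow (range fun z => H (t, z)) := by
  obtain ⟨C, hC⟩ := h.hasCompactSupport.exists_bound_of_continuous h.1.continuous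
  constructor
  · exact ⟨C, by rintro _ ⟨z, rfl⟩; exact (abs_le.1 (hC (t, z))).2⟩
  · exact ⟨-C, by rintro _ ⟨z, rfl⟩; exact (abs_le.1 (hC (t, z))).1⟩

/-- An admissible Hamiltonian vanishes outside the open time interval; at the endpoints this
is by continuity. -/
lemma AdmissibleH.eq_zero {n : ℕ} {H : ℝ × E n → ℝ} (h : AdmissibleH n univ H)
    {t : ℝ} (ht : t ≤ 0 ∨ 1 ≤ t) (z : E n) : H (t, z) = 0 := by
  have hc : Continuous fun s : ℝ => H (s, z) := h.1.continuous.comp (by fun_prop)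
  have hcl : IsClosed {s : ℝ | H (s, z) = 0} := isClosed_eq hc continuous_const
  have h0 : ∀ s : ℝ, s < 0 ∨ 1 < s → H (s, z) = 0 := by
    intro s hs
    refine image_eq_zero_of_notMem_tsupport fun hm => ?_
    obtain ⟨h1, h2⟩ := (h.2.2 hm).1
    simp only at h1 h2
    rcases hs with hs | hs <;> linarith
  rcases ht with ht | ht
  · have : closure (Iio (0:ℝ)) ⊆ {s : ℝ | H (s, z) = 0} :=
      closure_minimal (fun s hs => h0 s (Or.inl hs)) hcl
    exact this (by rw [closure_Iio]; exact ht)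
  · have : closure (Ioi (1:ℝ)) ⊆ {s : ℝ | H (s, z) = 0} :=
      closure_minimal (fun s hs => h0 s (Or.inr hs)) hcl
    exact this (by rw [closure_Ioi]; exact ht)

lemma AdmissibleH.XH_eq_zero {n : ℕ} {H : ℝ × E n → ℝ} (h : AdmissibleH n univ H)
    {t : ℝ} (ht : t ≤ 0 ∨ 1 ≤ t) (z : E n) : XH n H t z = 0 := by
  rw [XH_eq, show (fun w => H (t, w)) = fun _ => 0 from funext fun w => h.eq_zero ht w, sgrad_zero]

lemma AdmissibleH.continuous_oscil {n : ℕ} {H : ℝ × E n → ℝ} (h : AdmissibleH n univ H) :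
    Continuous fun t => oscil fun z => H (t, z) := by
  have hu : UniformContinuous H :=
    h.1.continuous.uniformContinuous_of_tendsto_cocompact h.hasCompactSupport.is_zero_at_infty
  rw [Metric.continuous_iff]
  intro t ε hε
  obtain ⟨δ, hδ, hd⟩ := Metric.uniformContinuous_iff.1 hu (ε / 4) (by positivity)
  refine ⟨δ, hδ, fun s hs => ?_⟩
  rw [Real.dist_eq]
  have := abs_oscil_sub_le (ε := ε / 4) (h.bdd s).1 (h.bdd s).2 (h.bdd t).1 (h.bdd t).2
    (fun z => by
      have := @hd (s, z) (t, z) (by simpa [Prod.dist_eq] using hs)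
      rw [Real.dist_eq] at this
      exact this.le)
  linarith

lemma AdmissibleH.HNorm_nonneg {n : ℕ} {H : ℝ × E n → ℝ} (h : AdmissibleH n univ H) :
    0 ≤ HNorm n H := by
  rw [HNorm_eq]
  exact intervalIntegral.integral_nonneg zero_le_one
    fun t _ => oscil_nonneg _ (h.bdd t).1 (h.bdd t).2

/-- The field `(t, z) ↦ X_{H_t}(z)` is smooth with compact support on `ℝ × E`. -/
lemma AdmissibleH.XH_smooth {n : ℕ} {H : ℝ × E n → ℝ} (h : AdmissibleH n univ H) :
    ContDiff ℝ ∞ (fun q : ℝ × E n => XH n H q.1 q.2) ∧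
      HasCompactSupport (fun q : ℝ × E n => XH n H q.1 q.2) := by
  have hdir : ∀ (q : ℝ × E n) (v : E n),
      fderiv ℝ (fun w => H (q.1, w)) q.2 v = fderiv ℝ H q (0, v) := by
    intro q v
    have h1 : HasFDerivAt H (fderiv ℝ H q) (q.1, q.2) :=
      ((h.1.differentiable (by simp)) q).hasFDerivAt
    have h2 : HasFDerivAt (fun w : E n => (q.1, w)) (ContinuousLinearMap.inr ℝ ℝ (E n)) q.2 :=
      hasFDerivAt_prodMk_right q.1 q.2
    have h3 : HasFDerivAt (fun w => H (q.1, w))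
        ((fderiv ℝ H q).comp (ContinuousLinearMap.inr ℝ ℝ (E n))) q.2 := h1.comp q.2 h2
    rw [h3.fderiv]
    simp
  have heq : (fun q : ℝ × E n => XH n H q.1 q.2) = fun q =>
      ((fun i => fderiv ℝ H q (0, (0, Pi.single i 1))),
       (fun i => -fderiv ℝ H q (0, (Pi.single i 1, 0)))) := by
    funext q
    simp only [XH, hdir]
  have hf : ContDiff ℝ ∞ (fderiv ℝ H) := h.1.fderiv_right (by simp)
  rw [heq]
  constructor
  · refine ContDiff.prodMk ?_ ?_
    · exact contDiff_pi.2 fun i => hf.clm_apply contDiff_const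
    · exact contDiff_pi.2 fun i => (hf.clm_apply contDiff_const).neg
  · refine (h.hasCompactSupport.fderiv (𝕜 := ℝ)).mono fun q hq => ?_
    contrapose! hq
    have hq' : fderiv ℝ H q = 0 := by simpa using hq
    simp only [notMem_support, hq']
    ext i <;> simp

lemma AdmissibleH.XH_lipschitz {n : ℕ} {H : ℝ × E n → ℝ} (h : AdmissibleH n univ H) :
    ∃ K : ℝ≥0, ∀ t, LipschitzWith K (XH n H t) := by
  obtain ⟨hs, hc⟩ := h.XH_smooth
  obtain ⟨K, hK⟩ := ContDiff.lipschitzWith_of_hasCompactSupport hc hs (by simp)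
  refine ⟨K, fun t => LipschitzWith.of_dist_le_mul fun x y => ?_⟩
  simpa [Prod.dist_eq] using hK.dist_le_mul (t, x) (t, y)

/-! ### Elementary properties of Hamiltonian flows -/

section flow
variable {n : ℕ} {H : ℝ × E n → ℝ} {Φ : ℝ → E n → E n}

lemma IsHamFlow.continuous_time (hΦ : IsHamFlow n H Φ) (z : E n) : Continuous fun s => Φ s z :=
  continuous_iff_continuousAt.2 fun t => (hΦ.2 z t).continuousAt

lemma IsHamFlow.flow_neg (h : AdmissibleH n univ H) (hΦ : IsHamFlow n H Φ) {t : ℝ} (ht : t ≤ 0)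
    (z : E n) : Φ t z = z := by
  rcases ht.eq_or_lt with rfl | hlt
  · exact hΦ.1 z
  have := (convex_Icc t 0).is_const_of_fderivWithin_eq_zero (𝕜 := ℝ) (f := fun s => Φ s z)
    (fun s _ => (hΦ.2 z s).differentiableAt.differentiableWithinAt)
    (fun s hs => by
      have h1 := hΦ.2 z s
      rw [h.XH_eq_zero (Or.inl hs.2)] at h1
      have h2 := h1.hasFDerivAt.hasFDerivWithinAt (s := Icc t 0)
      rw [h2.fderivWithin (uniqueDiffOn_Icc hlt s hs)]
      ext <;> simp)
    (left_mem_Icc.2 ht) (right_mem_Icc.2 ht)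
  exact this.trans (hΦ.1 z)

lemma IsHamFlow.flow_one (h : AdmissibleH n univ H) (hΦ : IsHamFlow n H Φ) {t : ℝ} (ht : 1 ≤ t)
    (z : E n) : Φ t z = Φ 1 z := by
  rcases ht.eq_or_lt with rfl | hlt
  · rfl
  exact (convex_Icc 1 t).is_const_of_fderivWithin_eq_zero (𝕜 := ℝ) (f := fun s => Φ s z)
    (fun s _ => (hΦ.2 z s).differentiableAt.differentiableWithinAt)
    (fun s hs => by
      have h1 := hΦ.2 z s
      rw [h.XH_eq_zero (Or.inr hs.1)] at h1
      have h2 := h1.hasFDerivAt.hasFDerivWithinAt (s := Icc 1 t)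
      rw [h2.fderivWithin (uniqueDiffOn_Icc hlt s hs)]
      ext <;> simp)
    (right_mem_Icc.2 ht) (left_mem_Icc.2 ht)

lemma IsHamFlow.continuous_one (h : AdmissibleH n univ H) (hΦ : IsHamFlow n H Φ) :
    Continuous (Φ 1) := by
  obtain ⟨K, hK⟩ := h.XH_lipschitz
  refine (LipschitzWith.of_dist_le_mul (K := (Real.exp K).toNNReal) fun x y => ?_).continuous
  have := dist_le_of_trajectories_ODE (a := 0) (b := 1) (v := XH n H) hK
    (hΦ.continuous_time x).continuousOn (fun t _ => (hΦ.2 x t).hasDerivWithinAt)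
    (hΦ.continuous_time y).continuousOn (fun t _ => (hΦ.2 y t).hasDerivWithinAt)
    (le_refl _) 1 (by simp)
  simp only [hΦ.1] at this
  rw [Real.coe_toNNReal _ (Real.exp_pos _).le]
  simpa [mul_comm] using this

lemma IsHamFlow.injective_one (h : AdmissibleH n univ H) (hΦ : IsHamFlow n H Φ) :
    Injective (Φ 1) := by
  obtain ⟨K, hK⟩ := h.XH_lipschitz
  intro x y hxy
  have := ODE_solution_unique_univ (v := XH n H) (K := K) (s := fun _ => univ) (t₀ := 1)
    (f := fun s => Φ s x) (g := fun s => Φ s y)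
    (fun t => (hK t).lipschitzOnWith) (fun t => ⟨hΦ.2 x t, trivial⟩)
    (fun t => ⟨hΦ.2 y t, trivial⟩) hxy
  have h0 := congrFun this 0
  simpa [hΦ.1] using h0

/-- Surjectivity: solve the equation backwards from time `1`. The field is bounded, so one
application of Picard–Lindelöf covers all of `[0, 1]`. -/
lemma IsHamFlow.surjective_one (h : AdmissibleH n univ H) (hΦ : IsHamFlow n H Φ) :
    Surjective (Φ 1) := by
  obtain ⟨K, hK⟩ := h.XH_lipschitz
  obtain ⟨hs, hc⟩ := h.XH_smooth
  obtain ⟨C, hC⟩ := hc.exists_bound_of_continuous hs.continuous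
  intro w
  have hC0 : 0 ≤ C := (norm_nonneg _).trans (hC (0, w))
  have hPL : IsPicardLindelof (XH n H) (tmin := 0) (tmax := 1) ⟨1, by simp⟩ w
      C.toNNReal 0 C.toNNReal K :=
    { lipschitzOnWith := fun t _ => (hK t).lipschitzOnWith
      continuousOn := fun x _ => (hs.continuous.comp
        (continuous_id.prodMk continuous_const : Continuous fun t : ℝ => (t, x))).continuousOn
      norm_le := fun t _ x _ => by
        rw [Real.coe_toNNReal _ hC0]; exact hC (t, x)
      mul_max_le := by simp }
  obtain ⟨γ, hγ1, hγ⟩ := hPL.exists_eq_forall_mem_Icc_hasDerivWithinAt₀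
  refine ⟨γ 0, ?_⟩
  have hcont : ContinuousOn γ (Icc 0 1) := fun t ht => (hγ t ht).continuousWithinAt
  have := ODE_solution_unique (v := XH n H) (K := K) (a := 0) (b := 1)
    (f := fun s => Φ s (γ 0)) (g := γ) hK
    (hΦ.continuous_time _).continuousOn (fun t _ => (hΦ.2 _ t).hasDerivWithinAt)
    hcont (fun t ht => (hγ t ⟨ht.1, ht.2.le⟩).mono_of_mem_nhdsWithin
      (Icc_mem_nhdsGE_of_mem ht)) (hΦ.1 _)
  exact (this (right_mem_Icc.2 zero_le_one)).trans hγ1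

end flow

/-! ### The Hofer length: composition, inversion and conjugation -/

/-- `φ` is the time-one map of an admissible Hamiltonian of Hofer length less than `ε`. -/
def HoferLT {n : ℕ} (ε : ℝ) (φ : Equiv.Perm (E n)) : Prop :=
  ∃ H Φ, AdmissibleH n univ H ∧ IsHamFlow n H Φ ∧ ⇑φ = Φ 1 ∧ HNorm n H < ε

lemma admissibleH_of {n : ℕ} {K : ℝ × E n → ℝ} (hK : ContDiff ℝ ∞ K) {C : Set (E n)}
    (hC : IsCompact C) (h : ∀ t z, K (t, z) ≠ 0 → t ∈ Icc (0:ℝ) 1 ∧ z ∈ C) :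
    AdmissibleH n univ K := by
  have hsub : tsupport K ⊆ Icc (0:ℝ) 1 ×ˢ C :=
    closure_minimal (fun q hq => h q.1 q.2 hq) (isClosed_Icc.prod hC.isClosed)
  exact ⟨hK, (isCompact_Icc.prod hC).of_isClosed_subset (isClosed_tsupport K) hsub,
    hsub.trans (prod_mono_right (subset_univ _))⟩

/-- Spatial compact set containing the support of an admissible Hamiltonian. -/
lemma AdmissibleH.exists_compact {n : ℕ} {H : ℝ × E n → ℝ} (h : AdmissibleH n univ H) :
    ∃ C : Set (E n), IsCompact C ∧ ∀ t z, H (t, z) ≠ 0 → z ∈ C :=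
  ⟨Prod.snd '' tsupport H, h.2.1.image continuous_snd,
    fun t z hz => ⟨(t, z), subset_tsupport _ hz, rfl⟩⟩

lemma hamGrp_iff_hoferLT {n : ℕ} {φ : E n → E n} :
    φ ∈ HamGrp n univ ↔ ∃ (ε : ℝ) (g : Equiv.Perm (E n)), ⇑g = φ ∧ HoferLT ε g := by
  constructor
  · rintro ⟨H, Φ, hH, hΦ, rfl⟩
    exact ⟨HNorm n H + 1,
      Equiv.ofBijective (Φ 1) ⟨hΦ.injective_one hH, hΦ.surjective_one hH⟩, rfl,
      H, Φ, hH, hΦ, rfl, by linarith⟩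
  · rintro ⟨ε, g, rfl, H, Φ, hH, hΦ, h1, -⟩
    exact ⟨H, Φ, hH, hΦ, h1⟩

lemma HoferLT.mem {n : ℕ} {ε : ℝ} {g : Equiv.Perm (E n)} (h : HoferLT ε g) :
    ⇑g ∈ HamGrp n univ := hamGrp_iff_hoferLT.2 ⟨ε, g, rfl, h⟩

lemma HoferLT.hoferNorm_lt {n : ℕ} {ε : ℝ} {g : Equiv.Perm (E n)} (h : HoferLT ε g) :
    hoferNorm n univ g < ε := by
  obtain ⟨H, Φ, hH, hΦ, h1, h2⟩ := h
  refine lt_of_le_of_lt (csInf_le ⟨0, ?_⟩ ⟨H, Φ, hH, hΦ, h1, rfl⟩) h2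
  rintro _ ⟨H', Φ', hH', -, -, rfl⟩
  exact hH'.HNorm_nonneg

/-- Membership in `Ham` ensures that the infimum defining the Hofer norm is not the default
value of an empty infimum. -/
lemma hoferLT_of_hoferNorm_lt {n : ℕ} {ε : ℝ} {g : Equiv.Perm (E n)}
    (hg : ⇑g ∈ HamGrp n univ) (h : hoferNorm n univ g < ε) : HoferLT ε g := by
  obtain ⟨H, Φ, hH, hΦ, h1⟩ := hg
  obtain ⟨_, ⟨H', Φ', hH', hΦ', h1', rfl⟩, h2⟩ := exists_lt_of_csInf_lt
    (s := {c | ∃ H Φ, AdmissibleH n univ H ∧ IsHamFlow n H Φ ∧ ⇑g = Φ 1 ∧ c = HNorm n H})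
    ⟨_, H, Φ, hH, hΦ, h1, rfl⟩ h
  exact ⟨H', Φ', hH', hΦ', h1', h2⟩

lemma HoferLT.one {n : ℕ} {ε : ℝ} (hε : 0 < ε) : HoferLT ε (1 : Equiv.Perm (E n)) := by
  refine ⟨fun _ => 0, fun _ z => z,
    admissibleH_of contDiff_const isCompact_empty (fun t z h => (h rfl).elim),
    ⟨fun z => rfl, fun z t => ?_⟩, rfl, ?_⟩
  · rw [XH_eq, sgrad_zero]
    exact hasDerivAt_const t z
  · rw [HNorm_eq]
    simpa [oscil_zero] using hε

/-- The concatenation `2 H₂(2t, ·) + 2 H₁(2t − 1, ·)` needs no smoothing at `t = 1/2`: both summands are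
smooth on all of `ℝ × E`, and at most one of them is nonzero at any time. -/
lemma HoferLT.mul {n : ℕ} {ε₁ ε₂ : ℝ} {g₁ g₂ : Equiv.Perm (E n)}
    (h₁ : HoferLT ε₁ g₁) (h₂ : HoferLT ε₂ g₂) : HoferLT (ε₁ + ε₂) (g₁ * g₂) := by
  obtain ⟨H₁, Φ₁, hH₁, hΦ₁, e₁, l₁⟩ := h₁
  obtain ⟨H₂, Φ₂, hH₂, hΦ₂, e₂, l₂⟩ := h₂
  obtain ⟨C₁, hC₁, hs₁⟩ := hH₁.exists_compact
  obtain ⟨C₂, hC₂, hs₂⟩ := hH₂.exists_compact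
  let K : ℝ × E n → ℝ := fun q => 2 * H₂ (2 * q.1, q.2) + 2 * H₁ (2 * q.1 - 1, q.2)
  have hKl : ∀ t : ℝ, t ≤ 1 / 2 → (fun z => K (t, z)) = fun z => 2 * H₂ (2 * t, z) := by
    intro t ht
    funext z
    simp [K, hH₁.eq_zero (t := 2 * t - 1) (Or.inl (by linarith)) z]
  have hKr : ∀ t : ℝ, 1 / 2 ≤ t → (fun z => K (t, z)) = fun z => 2 * H₁ (2 * t - 1, z) := by
    intro t ht
    funext z
    simp [K, hH₂.eq_zero (t := 2 * t) (Or.inr (by linarith)) z]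
  have hK : AdmissibleH n univ K := by
    refine admissibleH_of ?_ (hC₁.union hC₂) ?_
    · refine ContDiff.add (contDiff_const.mul (hH₂.1.comp ?_))
        (contDiff_const.mul (hH₁.1.comp ?_)) <;> fun_prop
    · intro t z hz
      rcases le_total t (1 / 2) with ht | ht
      · have h2 : H₂ (2 * t, z) ≠ 0 := by
          intro h0
          exact hz ((congrFun (hKl t ht) z).trans (by simp [h0]))
        refine ⟨⟨?_, by linarith⟩, Or.inr (hs₂ _ _ h2)⟩
        by_contra hlt
        exact h2 (hH₂.eq_zero (Or.inl (by linarith)) z)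
      · have h2 : H₁ (2 * t - 1, z) ≠ 0 := by
          intro h0
          exact hz ((congrFun (hKr t ht) z).trans (by simp [h0]))
        refine ⟨⟨by linarith, ?_⟩, Or.inl (hs₁ _ _ h2)⟩
        by_contra hlt
        exact h2 (hH₁.eq_zero (Or.inr (by linarith)) z)
  refine ⟨K, fun t z => Φ₂ (2 * t) z + (Φ₁ (2 * t - 1) (Φ₂ 1 z) - Φ₂ 1 z), hK, ⟨?_, ?_⟩, ?_, ?_⟩
  · intro z
    simp only [mul_zero, hΦ₂.1, hΦ₁.flow_neg hH₁ (show (0:ℝ) - 1 ≤ 0 by norm_num)]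
    simp
  · intro z t
    have d2 : HasDerivAt (fun s : ℝ => Φ₂ (2 * s) z) ((2:ℝ) • XH n H₂ (2 * t) (Φ₂ (2 * t) z)) t := by
      have hl : HasDerivAt (fun s : ℝ => 2 * s) 2 t := by
        simpa using (hasDerivAt_id t).const_mul (2:ℝ)
      exact (hΦ₂.2 z (2 * t)).scomp t hl
    have d1 : HasDerivAt (fun s : ℝ => Φ₁ (2 * s - 1) (Φ₂ 1 z))
        ((2:ℝ) • XH n H₁ (2 * t - 1) (Φ₁ (2 * t - 1) (Φ₂ 1 z))) t := by
      have hl : HasDerivAt (fun s : ℝ => 2 * s - 1) 2 t := by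
        simpa using ((hasDerivAt_id t).const_mul (2:ℝ)).sub_const 1
      exact (hΦ₁.2 (Φ₂ 1 z) (2 * t - 1)).scomp t hl
    have d := d2.add (d1.sub_const (Φ₂ 1 z))
    refine d.congr_deriv ?_
    rcases le_total t (1 / 2) with ht | ht
    · rw [XH_eq K, hKl t ht, sgrad_const_mul (hH₂.slice_differentiable _),
        hH₁.XH_eq_zero (Or.inl (by linarith : 2 * t - 1 ≤ 0))]
      simp [XH_eq, hΦ₁.flow_neg hH₁ (show 2 * t - 1 ≤ 0 by linarith)]
    · rw [XH_eq K, hKr t ht, sgrad_const_mul (hH₁.slice_differentiable _),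
        hH₂.XH_eq_zero (Or.inr (by linarith : 1 ≤ 2 * t))]
      simp [XH_eq, hΦ₂.flow_one hH₂ (show 1 ≤ 2 * t by linarith)]
  · funext z
    have h2 := hΦ₂.flow_one hH₂ (show (1:ℝ) ≤ 2 * 1 by norm_num) z
    simp only [Equiv.Perm.mul_apply, e₁, e₂, h2]
    norm_num
  · have i : HNorm n K = HNorm n H₂ + HNorm n H₁ := by
      have hi : ∀ a b : ℝ, IntervalIntegrable (fun t => oscil fun z => K (t, z))
          MeasureTheory.volume a b := fun a b => hK.continuous_oscil.intervalIntegrable a b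
      rw [HNorm_eq, ← intervalIntegral.integral_add_adjacent_intervals (hi 0 (1 / 2)) (hi (1 / 2) 1)]
      congr 1
      · rw [intervalIntegral.integral_congr (g := fun t => 2 * oscil fun z => H₂ (2 * t, z))]
        · rw [intervalIntegral.integral_const_mul]
          have := intervalIntegral.mul_integral_comp_mul_left (a := 0) (b := 1 / 2)
            (f := fun s => oscil fun z => H₂ (s, z)) (2:ℝ)
          rw [this, HNorm_eq]
          norm_num
        · intro t ht
          rw [uIcc_of_le (by norm_num)] at ht
          simp only
          rw [hKl t ht.2, oscil_const_mul _ zero_le_two]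
      · rw [intervalIntegral.integral_congr (g := fun t => 2 * oscil fun z => H₁ (2 * t - 1, z))]
        · rw [intervalIntegral.integral_const_mul]
          have := intervalIntegral.mul_integral_comp_mul_sub (a := 1 / 2) (b := 1)
            (f := fun s => oscil fun z => H₁ (s, z)) (2:ℝ) 1
          rw [this, HNorm_eq]
          norm_num
        · intro t ht
          rw [uIcc_of_le (by norm_num)] at ht
          simp only
          rw [hKr t ht.1, oscil_const_mul _ zero_le_two]
    rw [i]; linarith

lemma HoferLT.inv {n : ℕ} {ε : ℝ} {g : Equiv.Perm (E n)} (h : HoferLT ε g) :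
    HoferLT ε g⁻¹ := by
  obtain ⟨H, Φ, hH, hΦ, e, l⟩ := h
  obtain ⟨C, hC, hs⟩ := hH.exists_compact
  refine ⟨fun q => -H (1 - q.1, q.2), fun t z => Φ (1 - t) (g⁻¹ z), ?_, ⟨?_, ?_⟩, ?_, ?_⟩
  · refine admissibleH_of ?_ hC ?_
    · refine (hH.1.comp ?_).neg
      fun_prop
    · intro t z hz
      have hz' : H (1 - t, z) ≠ 0 := by simpa using hz
      refine ⟨⟨?_, ?_⟩, hs _ _ hz'⟩ <;> by_contra hlt
      · exact hz' (hH.eq_zero (Or.inr (by linarith)) z)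
      · exact hz' (hH.eq_zero (Or.inl (by linarith)) z)
  · intro z
    simp only [sub_zero]
    rw [← e]; simp
  · intro z t
    have hl : HasDerivAt (fun s : ℝ => 1 - s) (-1) t := by
      simpa using (hasDerivAt_id t).const_sub 1
    have d : HasDerivAt (fun s : ℝ => Φ (1 - s) (g⁻¹ z)) _ t :=
      (hΦ.2 (g⁻¹ z) (1 - t)).scomp t hl
    refine d.congr_deriv ?_
    rw [XH_eq, XH_eq, sgrad_neg]
    simp
  · funext z
    simp [hΦ.1]
  · have i : HNorm n (fun q => -H (1 - q.1, q.2)) = HNorm n H := by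
      rw [HNorm_eq, HNorm_eq]
      have := intervalIntegral.integral_comp_sub_left (a := 0) (b := 1)
        (fun s => oscil fun z => H (s, z)) 1
      simp only [sub_self, sub_zero] at this
      rw [← this]
      simp only [oscil_neg fun z => H (_, z)]
    rw [i]; exact l

/-! ### Symplectic diffeomorphisms and conjugation invariance -/

/-- `h` is a symplectic diffeomorphism of `E`. -/
structure SympDiffeo {n : ℕ} (h : Equiv.Perm (E n)) : Prop where
  smooth : ContDiff ℝ ∞ h
  smooth_inv : ContDiff ℝ ∞ ⇑(h⁻¹)
  sympl : ∀ z u v, omega0 n (fderiv ℝ h z u) (fderiv ℝ h z v) = omega0 n u v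

lemma omega0_sgrad {n : ℕ} (f : E n → ℝ) (z v : E n) :
    omega0 n (sgrad f z) v = fderiv ℝ f z v := by
  have hv : v = ∑ i, (v.1 i • ((Pi.single i 1, 0) : E n) + v.2 i • ((0, Pi.single i 1) : E n)) := by
    ext j
    · simp [Prod.fst_sum, Finset.sum_apply, Pi.single_apply]
    · simp [Prod.snd_sum, Finset.sum_apply, Pi.single_apply]
  conv_rhs => rw [hv]
  simp only [map_sum, map_add, map_smul, smul_eq_mul, omega0, sgrad]
  rw [← Finset.sum_sub_distrib]
  exact Finset.sum_congr rfl fun i _ => by ring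

lemma omega0_nondeg {n : ℕ} {u w : E n} (h : ∀ v, omega0 n u v = omega0 n w v) : u = w := by
  ext i
  · simpa [omega0, Pi.single_apply] using h (0, Pi.single i 1)
  · simpa [omega0, Pi.single_apply] using h (Pi.single i 1, 0)

lemma SympDiffeo.sgrad_conj {n : ℕ} {h : Equiv.Perm (E n)} (hh : SympDiffeo h) {f : E n → ℝ}
    (hf : Differentiable ℝ f) (z : E n) :
    fderiv ℝ h z (sgrad f z) = sgrad (fun w => f (h⁻¹ w)) (h z) := by
  have hd : Differentiable ℝ h := hh.smooth.differentiable (by simp)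
  have hd' : Differentiable ℝ ⇑(h⁻¹) := hh.smooth_inv.differentiable (by simp)
  have hr : ∀ v, fderiv ℝ h z (fderiv ℝ ⇑(h⁻¹) (h z) v) = v := by
    intro v
    have e : ⇑h ∘ ⇑(h⁻¹) = id := by ext x <;> simp
    have d1 : HasFDerivAt ⇑(h⁻¹) (fderiv ℝ ⇑(h⁻¹) (h z)) (h z) := (hd' _).hasFDerivAt
    have d2 : HasFDerivAt ⇑h (fderiv ℝ h z) (h⁻¹ (h z)) := by
      simpa using (hd z).hasFDerivAt
    have d3 := d2.comp (h z) d1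
    rw [e] at d3
    exact congrArg (fun L => L v) (d3.unique (hasFDerivAt_id _))
  refine omega0_nondeg fun v => ?_
  have d1 : HasFDerivAt ⇑(h⁻¹) (fderiv ℝ ⇑(h⁻¹) (h z)) (h z) := (hd' _).hasFDerivAt
  have d2 : HasFDerivAt f (fderiv ℝ f z) (h⁻¹ (h z)) := by
    simpa using (hf z).hasFDerivAt
  have d3 : HasFDerivAt (fun w => f (h⁻¹ w)) _ (h z) := d2.comp (h z) d1
  rw [omega0_sgrad, d3.fderiv]
  conv_lhs => rw [← hr v]
  rw [hh.sympl, omega0_sgrad]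
  rfl

lemma HoferLT.conj {n : ℕ} {ε : ℝ} {g h : Equiv.Perm (E n)} (hg : HoferLT ε g)
    (hh : SympDiffeo h) : HoferLT ε (h * g * h⁻¹) := by
  obtain ⟨H, Φ, hH, hΦ, e, l⟩ := hg
  obtain ⟨C, hC, hs⟩ := hH.exists_compact
  refine ⟨fun q => H (q.1, h⁻¹ q.2), fun t z => h (Φ t (h⁻¹ z)), ?_, ⟨?_, ?_⟩, ?_, ?_⟩
  · refine admissibleH_of ?_ (hC.image hh.smooth.continuous) ?_
    · exact hH.1.comp (contDiff_fst.prodMk (hh.smooth_inv.comp contDiff_snd))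
    · intro t z hz
      refine ⟨⟨?_, ?_⟩, ⟨_, hs _ _ hz, by simp⟩⟩ <;> by_contra hlt
      · exact hz (hH.eq_zero (Or.inl (by linarith)) _)
      · exact hz (hH.eq_zero (Or.inr (by linarith)) _)
  · intro z
    simp [hΦ.1]
  · intro z t
    have d1 := (hh.smooth.differentiable (by simp) (Φ t (h⁻¹ z))).hasFDerivAt
    have d : HasDerivAt (fun s => h (Φ s (h⁻¹ z))) _ t := d1.comp_hasDerivAt t (hΦ.2 (h⁻¹ z) t)
    refine d.congr_deriv ?_
    rw [XH_eq, XH_eq, hh.sgrad_conj (hH.slice_differentiable t)]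
  · funext z
    simp [e]
  · have i : HNorm n (fun q => H (q.1, h⁻¹ q.2)) = HNorm n H := by
      rw [HNorm_eq, HNorm_eq]
      congr 1
      funext t
      exact oscil_comp_surj (fun z => H (t, z)) (h⁻¹).surjective
    rw [i]; exact l

/-! ### Twist maps: explicit compactly supported Hamiltonian diffeomorphisms -/

section twist
variable {n : ℕ}

/-- The Euclidean inner product on `E`. -/
def edot (u v : E n) : ℝ := ∑ i, (u.1 i * v.1 i + u.2 i * v.2 i)

/-- The squared Euclidean norm on `E` (the norm of the product type is the sup norm). -/
def qn (z : E n) : ℝ := edot z z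

/-- The complex structure `J(x, y) = (y, −x)`, with `ω₀(Ju, v) = ⟨u, v⟩`. -/
def Jc : E n →L[ℝ] E n :=
  (ContinuousLinearMap.snd ℝ (Fin n → ℝ) (Fin n → ℝ)).prod
    (-ContinuousLinearMap.fst ℝ (Fin n → ℝ) (Fin n → ℝ))

lemma Jc_apply (z : E n) : Jc z = (z.2, -z.1) := rfl

lemma Jc_Jc (z : E n) : Jc (Jc z) = -z := by
  simp [Jc_apply, Prod.ext_iff]

lemma edot_comm (u v : E n) : edot u v = edot v u := by
  simp only [edot]; exact Finset.sum_congr rfl fun i _ => by ring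

lemma edot_add_left (u v w : E n) : edot (u + v) w = edot u w + edot v w := by
  simp only [edot, ← Finset.sum_add_distrib]
  exact Finset.sum_congr rfl fun i _ => by simp; ring

lemma edot_smul_left (a : ℝ) (u w : E n) : edot (a • u) w = a * edot u w := by
  simp only [edot, Finset.mul_sum]
  exact Finset.sum_congr rfl fun i _ => by simp; ring

lemma edot_add_right (u v w : E n) : edot u (v + w) = edot u v + edot u w := by
  rw [edot_comm, edot_add_left, edot_comm v, edot_comm w]

lemma edot_smul_right (a : ℝ) (u w : E n) : edot u (a • w) = a * edot u w := by
  rw [edot_comm, edot_smul_left, edot_comm]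

lemma edot_Jc_self (u : E n) : edot u (Jc u) = 0 := by
  simp only [edot, Jc_apply]
  exact Finset.sum_eq_zero fun i _ => by simp; ring

lemma edot_Jc_Jc (u v : E n) : edot (Jc u) (Jc v) = edot u v := by
  simp only [edot, Jc_apply]
  exact Finset.sum_congr rfl fun i _ => by simp; ring

lemma omega0_eq (u v : E n) : omega0 n u v = edot u (Jc v) := by
  simp only [omega0, edot, Jc_apply, ← Finset.sum_sub_distrib]
  exact Finset.sum_congr rfl fun i _ => by simp; ring

lemma qn_add_smul (w u : E n) (s : ℝ) :
    qn (w + s • u) = qn w + s * (2 * edot w u) + s ^ 2 * qn u := by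
  simp only [qn, edot_add_left, edot_add_right, edot_smul_left, edot_smul_right, edot_comm u w]
  ring

lemma qn_smul (s : ℝ) (u : E n) : qn (s • u) = s ^ 2 * qn u := by
  simp only [qn, edot_smul_left, edot_smul_right]; ring

lemma qn_nonneg (u : E n) : 0 ≤ qn u := by
  unfold qn edot
  exact Finset.sum_nonneg fun i _ => add_nonneg (mul_self_nonneg _) (mul_self_nonneg _)

lemma qn_neg (u : E n) : qn (-u) = qn u := by
  have := qn_smul (-1) u
  simpa using this

lemma qn_add_le (u v : E n) : qn (u + v) ≤ 2 * qn u + 2 * qn v := by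
  have h1 := qn_add_smul u v 1
  have h2 := qn_add_smul u v (-1)
  have h3 := qn_nonneg (u + (-1 : ℝ) • v)
  rw [one_smul] at h1
  linarith

/-- The sup norm is dominated by the Euclidean norm. -/
lemma norm_sq_le_qn (u : E n) : ‖u‖ ^ 2 ≤ qn u := by
  have h : ‖u‖ ≤ √(qn u) := by
    rw [Prod.norm_def]
    refine max_le ?_ ?_ <;> refine (pi_norm_le_iff_of_nonneg (Real.sqrt_nonneg _)).2 fun i => ?_ <;>
      rw [Real.norm_eq_abs] <;> refine Real.abs_le_sqrt ?_
    · refine le_trans ?_ (Finset.single_le_sum (f := fun i => u.1 i * u.1 i + u.2 i * u.2 i)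
        (fun i _ => add_nonneg (mul_self_nonneg _) (mul_self_nonneg _)) (Finset.mem_univ i))
      nlinarith [mul_self_nonneg (u.2 i)]
    · refine le_trans ?_ (Finset.single_le_sum (f := fun i => u.1 i * u.1 i + u.2 i * u.2 i)
        (fun i _ => add_nonneg (mul_self_nonneg _) (mul_self_nonneg _)) (Finset.mem_univ i))
      nlinarith [mul_self_nonneg (u.1 i)]
  calc ‖u‖ ^ 2 ≤ √(qn u) ^ 2 := by gcongr
    _ = qn u := Real.sq_sqrt (qn_nonneg u)

lemma qn_pos {u : E n} (hu : u ≠ 0) : 0 < qn u :=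
  lt_of_lt_of_le (by have := norm_pos_iff.2 hu; positivity) (norm_sq_le_qn u)

lemma contDiff_qn : ContDiff ℝ ∞ (qn : E n → ℝ) := by
  unfold qn edot
  fun_prop

/-- Rotation by the angle `a` in all complex coordinates. -/
def rot (a : ℝ) (z : E n) : E n := Real.cos a • z + Real.sin a • Jc z

lemma rot_zero (z : E n) : rot 0 z = z := by simp [rot]

lemma rot_pi (z : E n) : rot Real.pi z = -z := by simp [rot]

lemma rot_rot_neg (a : ℝ) (z : E n) : rot a (rot (-a) z) = z := by
  simp only [rot, Real.cos_neg, Real.sin_neg, map_add, map_smul, Jc_Jc]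
  have : z = (Real.cos a ^ 2 + Real.sin a ^ 2) • z := by rw [Real.cos_sq_add_sin_sq, one_smul]
  conv_rhs => rw [this]
  module

lemma edot_rot (a : ℝ) (u v : E n) : edot (rot a u) (rot a v) = edot u v := by
  have h : edot (Jc u) v = - edot u (Jc v) := by
    have := edot_Jc_Jc u (Jc v)
    rw [Jc_Jc, ← neg_one_smul ℝ, edot_smul_right] at this
    linarith
  simp only [rot, edot_add_left, edot_add_right, edot_smul_left, edot_smul_right, h, edot_Jc_Jc]
  linear_combination (edot u v) * Real.cos_sq_add_sin_sq a

lemma qn_rot (a : ℝ) (z : E n) : qn (rot a z) = qn z := edot_rot a z z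

lemma Jc_rot (a : ℝ) (z : E n) : Jc (rot a z) = rot a (Jc z) := by
  simp only [rot, map_add, map_smul]

/-- The twist about `c`: each sphere `|z − c|² = s` is rotated by the angle `a s`. -/
def twist (a : ℝ → ℝ) (c z : E n) : E n := c + rot (a (qn (z - c))) (z - c)

lemma twist_twist_neg (a : ℝ → ℝ) (c z : E n) :
    twist a c (twist (fun s => -a s) c z) = z := by
  simp [twist, qn_rot, rot_rot_neg]

/-- The twist as a bijection; the inverse rotates by the opposite angle. -/
def twistPerm (a : ℝ → ℝ) (c : E n) : Equiv.Perm (E n) where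
  toFun := twist a c
  invFun := twist (fun s => -a s) c
  left_inv z := by simpa using twist_twist_neg (fun s => -a s) c z
  right_inv z := twist_twist_neg a c z

lemma coe_twistPerm (a : ℝ → ℝ) (c : E n) : ⇑(twistPerm a c) = twist a c := rfl

lemma twistPerm_inv (a : ℝ → ℝ) (c : E n) :
    (twistPerm a c)⁻¹ = twistPerm (fun s => -a s) c := Equiv.ext fun _ => rfl

lemma contDiff_twist {a : ℝ → ℝ} (ha : ContDiff ℝ ∞ a) (c : E n) : ContDiff ℝ ∞ (twist a c) := by
  have h1 : ContDiff ℝ ∞ fun z : E n => a (qn (z - c)) :=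
    ha.comp (contDiff_qn.comp (contDiff_id.sub contDiff_const))
  unfold twist rot
  exact contDiff_const.add (((Real.contDiff_cos.comp h1).smul (contDiff_id.sub contDiff_const)).add
    ((Real.contDiff_sin.comp h1).smul (Jc.contDiff.comp (contDiff_id.sub contDiff_const))))

lemma hasDerivAt_qn_line (w u : E n) :
    HasDerivAt (fun s : ℝ => qn (w + s • u)) (2 * edot w u) 0 := by
  simp only [qn_add_smul]
  have h := (((hasDerivAt_id (0:ℝ)).mul_const (2 * edot w u)).const_add (qn w)).add
    (((hasDerivAt_id (0:ℝ)).pow 2).mul_const (qn u))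
  refine HasDerivAt.congr_deriv (f := fun s : ℝ => qn w + s * (2 * edot w u) + s ^ 2 * qn u) h ?_
  simp

/-- The derivative of a twist along lines through `z`. -/
lemma fderiv_twist {a : ℝ → ℝ} (ha : ContDiff ℝ ∞ a) (c z u : E n) :
    fderiv ℝ (twist a c) z u = rot (a (qn (z - c))) u +
      (deriv a (qn (z - c)) * (2 * edot (z - c) u)) • Jc (rot (a (qn (z - c))) (z - c)) := by
  have hdiff : Differentiable ℝ (twist a c) := (contDiff_twist ha c).differentiable (by simp)
  have hline : HasDerivAt (fun s : ℝ => z + s • u) u 0 := by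
    simpa using ((hasDerivAt_id (0:ℝ)).smul_const u).const_add z
  have d1 : HasDerivAt (fun s : ℝ => twist a c (z + s • u)) (fderiv ℝ (twist a c) z u) 0 := by
    have h0 : HasFDerivAt (twist a c) (fderiv ℝ (twist a c) z) (z + (0:ℝ) • u) := by
      simpa using (hdiff z).hasFDerivAt
    exact HasFDerivAt.comp_hasDerivAt (l := twist a c) (f := fun s : ℝ => z + s • u) (0:ℝ) h0 hline
  set w := z - c with hw
  have hline' : HasDerivAt (fun s : ℝ => w + s • u) u 0 := by
    simpa using ((hasDerivAt_id (0:ℝ)).smul_const u).const_add w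
  have dJ : HasDerivAt (fun s : ℝ => Jc (w + s • u)) (Jc u) 0 :=
    (Jc.hasFDerivAt (x := w + (0:ℝ) • u)).comp_hasDerivAt (0:ℝ) hline'
  have da : HasDerivAt (fun s : ℝ => a (qn (w + s • u))) (deriv a (qn w) * (2 * edot w u)) 0 := by
    have h0 : HasDerivAt a (deriv a (qn w)) (qn (w + (0:ℝ) • u)) := by
      simpa using ((ha.differentiable (by simp)) (qn w)).hasDerivAt
    exact h0.comp (0:ℝ) (hasDerivAt_qn_line w u)
  have d2 := ((da.cos.smul hline').add (da.sin.smul dJ)).const_add c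
  have heq : (fun s : ℝ => twist a c (z + s • u)) = fun s : ℝ =>
      c + (Real.cos (a (qn (w + s • u))) • (w + s • u) +
        Real.sin (a (qn (w + s • u))) • Jc (w + s • u)) := by
    funext s
    simp only [twist, rot, hw, add_sub_right_comm]
  rw [heq] at d1
  rw [d1.unique d2]
  simp only [rot, zero_smul, add_zero, map_add, map_smul, Jc_Jc]
  module

lemma sympDiffeo_twistPerm {a : ℝ → ℝ} (ha : ContDiff ℝ ∞ a) (c : E n) :
    SympDiffeo (twistPerm a c) := by
  refine ⟨contDiff_twist ha c, contDiff_twist ha.neg c, fun z u v => ?_⟩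
  rw [coe_twistPerm, fderiv_twist ha, fderiv_twist ha]
  simp only [omega0_eq, map_add, map_smul, edot_add_left, edot_add_right, edot_smul_left,
    edot_smul_right, Jc_rot, edot_rot, edot_Jc_Jc, edot_Jc_self]
  rw [Jc_Jc, ← neg_one_smul ℝ (z - c), edot_smul_right, edot_comm u (z - c)]
  ring

/-- The twist with angle `2 η'` is generated by a time-dependent multiple of `η(|z − c|²)`. -/
lemma hoferLT_twistPerm {η : ℝ → ℝ} (hη : ContDiff ℝ ∞ η) {M : ℝ} (hM : ∀ s, M < s → η s = 0)
    (c : E n) : ∃ ε, HoferLT ε (twistPerm (fun s => 2 * deriv η s) c) := by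
  -- The time profile: `B` rises from `0` at `t = 0` to `1` at `t = 1`.
  set B : ℝ → ℝ := Real.smoothTransition with hB
  have hBs : ContDiff ℝ ∞ B := Real.smoothTransition.contDiff
  have hB's : ContDiff ℝ ∞ (deriv B) := ContDiff.iterate_deriv 1 hBs
  have hB' : ∀ t, deriv B t ≠ 0 → t ∈ Icc (0:ℝ) 1 := by
    intro t ht
    by_contra hmem
    rw [mem_Icc, not_and_or, not_le, not_le] at hmem
    refine ht ?_
    rcases hmem with h | h
    · have : B =ᶠ[𝓝 t] fun _ => 0 := by
        filter_upwards [Iio_mem_nhds h] with s hs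
        exact Real.smoothTransition.zero_of_nonpos (le_of_lt hs)
      rw [this.deriv_eq]; simp
    · have : B =ᶠ[𝓝 t] fun _ => 1 := by
        filter_upwards [Ioi_mem_nhds h] with s hs
        exact Real.smoothTransition.one_of_one_le (le_of_lt hs)
      rw [this.deriv_eq]; simp
  set H : ℝ × E n → ℝ := fun q => deriv B q.1 * η (qn (q.2 - c)) with hHdef
  have hH : AdmissibleH n univ H := by
    refine admissibleH_of ?_ (isCompact_closedBall c (|M| + 1)) ?_
    · exact (hB's.comp contDiff_fst).mul
        (hη.comp (contDiff_qn.comp (contDiff_snd.sub contDiff_const)))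
    · intro t z hz
      refine ⟨hB' t (left_ne_zero_of_mul hz), ?_⟩
      have h1 : qn (z - c) ≤ M := by
        by_contra hlt
        exact right_ne_zero_of_mul hz (hM _ (not_le.1 hlt))
      rw [Metric.mem_closedBall, dist_eq_norm]
      have h2 := norm_sq_le_qn (z - c)
      have h3 := le_abs_self M
      have h4 := abs_nonneg M
      nlinarith [norm_nonneg (z - c)]
  have hX : ∀ t z, XH n H t z = (deriv B t * (2 * deriv η (qn (z - c)))) • Jc (z - c) := by
    intro t z
    refine omega0_nondeg fun v => ?_
    rw [XH_eq, omega0_sgrad]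
    have hdiff := hH.slice_differentiable t
    have hline : HasDerivAt (fun s : ℝ => z + s • v) v 0 := by
      simpa using ((hasDerivAt_id (0:ℝ)).smul_const v).const_add z
    have d1 : HasDerivAt (fun s : ℝ => H (t, z + s • v)) (fderiv ℝ (fun w => H (t, w)) z v) 0 := by
      have h0 : HasFDerivAt (fun w => H (t, w)) (fderiv ℝ (fun w => H (t, w)) z)
          (z + (0:ℝ) • v) := by
        simpa using (hdiff z).hasFDerivAt
      exact HasFDerivAt.comp_hasDerivAt (l := fun w => H (t, w)) (f := fun s : ℝ => z + s • v)
        (0:ℝ) h0 hline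
    have d2 : HasDerivAt (fun s : ℝ => η (qn ((z - c) + s • v)))
        (deriv η (qn (z - c)) * (2 * edot (z - c) v)) 0 := by
      have h0 : HasDerivAt η (deriv η (qn (z - c))) (qn ((z - c) + (0:ℝ) • v)) := by
        simpa using ((hη.differentiable (by simp)) (qn (z - c))).hasDerivAt
      exact h0.comp (0:ℝ) (hasDerivAt_qn_line (z - c) v)
    have d3 := d2.const_mul (deriv B t)
    have heq : (fun s : ℝ => H (t, z + s • v)) =
        fun s : ℝ => deriv B t * η (qn ((z - c) + s • v)) := by
      funext s
      simp only [hHdef, add_sub_right_comm]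
    rw [heq] at d1
    rw [d1.unique d3, omega0_eq, edot_smul_left, edot_Jc_Jc]
    ring
  refine ⟨HNorm n H + 1, H, fun t => twist (fun s => B t * (2 * deriv η s)) c, hH, ⟨?_, ?_⟩, ?_,
    by linarith⟩
  · intro z
    simp [twist, hB, Real.smoothTransition.zero, rot_zero]
  · intro z t
    set α := 2 * deriv η (qn (z - c)) with hα
    have da : HasDerivAt (fun s : ℝ => B s * α) (deriv B t * α) t :=
      ((hBs.differentiable (by simp) t).hasDerivAt).mul_const α
    have d := ((da.cos.smul_const (z - c)).add (da.sin.smul_const (Jc (z - c)))).const_add c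
    refine HasDerivAt.congr_deriv
      (f := fun s => twist (fun r => B s * (2 * deriv η r)) c z) d ?_
    rw [hX]
    simp only [twist, add_sub_cancel_left, qn_rot, ← hα]
    simp only [rot, map_add, map_smul, Jc_Jc]
    module
  · simp [coe_twistPerm, hB, Real.smoothTransition.one]

/-- Two points are exchanged by the half turn about their midpoint, cut off to a neighbourhood of
the sphere containing them. -/
lemma exists_swap_map (p x : E n) {δ : ℝ} (hδ : 0 < δ) :
    ∃ f : Equiv.Perm (E n), SympDiffeo f ∧ SympDiffeo f⁻¹ ∧ (∃ ε, HoferLT ε f) ∧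
      f p = x ∧ f x = p ∧
      ∀ z, qn (x - p) / 4 + δ ≤ qn (z - (1 / 2 : ℝ) • (p + x)) → f z = z := by
  set c : E n := (1 / 2 : ℝ) • (p + x) with hc
  set r : ℝ := qn (x - p) / 4 with hr
  let ρ : ContDiffBump r := ⟨δ / 4, δ / 2, by positivity, by linarith⟩
  -- `η' = π / 2` at `r`, so the twist angle `2 η'` is `π` on the sphere through `p` and `x`.
  let η : ℝ → ℝ := fun s => Real.pi / 2 * (s - r) * ρ s
  have hη : ContDiff ℝ ∞ η :=
    (contDiff_const.mul (contDiff_id.sub contDiff_const)).mul ρ.contDiff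
  have hη0 : ∀ s, r + δ / 2 ≤ s → η s = 0 := by
    intro s hs
    have : ρ s = 0 := ρ.zero_of_le_dist (by
      rw [Real.dist_eq]
      exact le_trans (by simp only [ρ]; linarith) (le_abs_self _))
    simp [η, this]
  have hηr : deriv η r = Real.pi / 2 := by
    have h1 : η =ᶠ[𝓝 r] fun s => Real.pi / 2 * (s - r) := by
      filter_upwards [ρ.eventuallyEq_one] with s hs
      simp only [η, hs, Pi.one_apply, mul_one]
    rw [h1.deriv_eq]
    simp
  have hηd : ∀ s, r + δ ≤ s → deriv η s = 0 := by
    intro s hs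
    have : η =ᶠ[𝓝 s] fun _ => 0 := by
      filter_upwards [Ioi_mem_nhds (show r + δ / 2 < s by linarith)] with y hy
      exact hη0 y (le_of_lt hy)
    rw [this.deriv_eq]; simp
  have ha : ContDiff ℝ ∞ (fun s => 2 * deriv η s) :=
    contDiff_const.mul (ContDiff.iterate_deriv 1 hη)
  have hpc : p - c = (-(1 / 2) : ℝ) • (x - p) := by rw [hc]; module
  have hxc : x - c = (1 / 2 : ℝ) • (x - p) := by rw [hc]; module
  have hqp : qn (p - c) = r := by rw [hpc, qn_smul, hr]; ring
  have hqx : qn (x - c) = r := by rw [hxc, qn_smul, hr]; ring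
  have h2 : 2 * (Real.pi / 2) = Real.pi := by ring
  refine ⟨twistPerm (fun s => 2 * deriv η s) c, sympDiffeo_twistPerm ha c, ?_,
    hoferLT_twistPerm hη (M := r + δ / 2) (fun s hs => hη0 s hs.le) c, ?_, ?_, ?_⟩
  · rw [twistPerm_inv]
    exact sympDiffeo_twistPerm ha.neg c
  · simp only [coe_twistPerm, twist, hqp, hηr, h2, rot_pi]
    rw [hpc, hc]; module
  · simp only [coe_twistPerm, twist, hqx, hηr, h2, rot_pi]
    rw [hxc, hc]; module
  · intro z hz
    simp [coe_twistPerm, twist, hηd _ hz, rot_zero]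

end twist

/-! ### Rigid points of `A` and the displacement of their neighbourhoods -/

section rigidity
variable {n : ℕ}

/-- A swap of two distinct points whose support lies close to them. -/
lemma exists_swap_local {p x : E n} (hx : x ≠ p) :
    ∃ f : Equiv.Perm (E n), SympDiffeo f ∧ SympDiffeo f⁻¹ ∧ (∃ ε, HoferLT ε f) ∧
      f p = x ∧ f x = p ∧
      (∀ z, qn (x - p) / 2 ≤ qn (z - (1 / 2 : ℝ) • (p + x)) → f z = z) ∧
      ∀ z, 2 * qn (x - p) ≤ qn (z - p) → f z = z := by
  have hq : 0 < qn (x - p) := qn_pos (sub_ne_zero.2 hx)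
  obtain ⟨f, hf, hf', hfh, h1, h2, h3⟩ :=
    exists_swap_map p x (δ := qn (x - p) / 4) (by positivity)
  have h4 : ∀ z, qn (x - p) / 2 ≤ qn (z - (1 / 2 : ℝ) • (p + x)) → f z = z :=
    fun z hz => h3 z (by linarith)
  refine ⟨f, hf, hf', hfh, h1, h2, h4, fun z hz => h4 z ?_⟩
  have e1 := qn_add_le (z - (1 / 2 : ℝ) • (p + x)) ((1 / 2 : ℝ) • (x - p))
  rw [show z - (1 / 2 : ℝ) • (p + x) + (1 / 2 : ℝ) • (x - p) = z - p by module, qn_smul] at e1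
  nlinarith

/-- A point of `R_A` stays in `A` under every Hamiltonian diffeomorphism of Hofer norm zero. -/
lemma mem_of_hoferLT_all {A : Set (E n)} {p : E n} (hp : p ∈ rigidLocus n A)
    {g : Equiv.Perm (E n)} (hg : ∀ ε, 0 < ε → HoferLT ε g) : g p ∈ A := by
  refine mem_iInter₂.1 hp g ⟨(hg 1 one_pos).mem, fun ε hε => ?_⟩
  refine ⟨⇑(1 : Equiv.Perm (E n)), ⟨(HoferLT.one one_pos).mem, by simp⟩, id,
    fun _ => rfl, fun _ => rfl, ?_⟩
  exact (hg ε hε).hoferNorm_lt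

/-- If `U` is moved off `A` with arbitrarily small energy, then every Hamiltonian diffeomorphism
`f` supported in `U` lies in the Hofer closure of `Σ_A`: it is close to `θ f θ⁻¹`, which is
supported away from `A`. Hence `f` keeps a point of `R_A` in `A`. -/
lemma mem_of_displaceable {A U : Set (E n)} {p : E n} (hp : p ∈ rigidLocus n A)
    (hU : ∀ ε, 0 < ε → ∃ θ : Equiv.Perm (E n), HoferLT ε θ ∧ ∀ z ∈ U, θ z ∉ A)
    {f : Equiv.Perm (E n)} (hf : SympDiffeo f⁻¹) (hfh : ∃ ε, HoferLT ε f)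
    (hfU : ∀ z, z ∉ U → f z = z) : f p ∈ A := by
  obtain ⟨ε₀, hfε⟩ := hfh
  refine mem_iInter₂.1 hp f ⟨hfε.mem, fun ε hε => ?_⟩
  obtain ⟨θ, hθ, hθU⟩ := hU (ε / 2) (by positivity)
  have hfix : ∀ a ∈ A, (θ * f * θ⁻¹) a = a := by
    intro a ha
    have h1 : f (θ⁻¹ a) = θ⁻¹ a := hfU _ fun hmem => hθU _ hmem (by simpa using ha)
    rw [Equiv.Perm.mul_apply, Equiv.Perm.mul_apply, h1]
    exact θ.apply_symm_apply a
  refine ⟨⇑(θ * f * θ⁻¹), ⟨((hθ.mul hfε).mul hθ.inv).mem, ?_⟩, ⇑(θ * f * θ⁻¹)⁻¹,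
    fun z => Equiv.symm_apply_apply _ z, fun z => Equiv.apply_symm_apply _ z, ?_⟩
  · rw [image_congr hfix, image_id']
  · have h1 : (θ * f * θ⁻¹)⁻¹ * f = θ * (f⁻¹ * θ⁻¹ * f⁻¹⁻¹) := by group
    have h2 := hθ.mul (hθ.inv.conj hf)
    rw [← h1, add_halves] at h2
    exact h2.hoferNorm_lt

/-- If `g` and `f` are supported in a set `V` which is displaced from itself with arbitrarily
small energy, then their commutator has Hofer norm zero. -/
lemma commutator_hoferLT {V : Set (E n)}
    (hV : ∀ ε, 0 < ε → ∃ θ : Equiv.Perm (E n), HoferLT ε θ ∧ ∀ z ∈ V, θ z ∉ V)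
    {f g : Equiv.Perm (E n)} (hf : SympDiffeo f) (hg : SympDiffeo g)
    (hfV : ∀ z, z ∉ V → f z = z) (hgV : ∀ z, z ∉ V → g z = z) {ε : ℝ} (hε : 0 < ε) :
    HoferLT ε (g * f * g⁻¹ * f⁻¹) := by
  obtain ⟨θ, hθ, hθV⟩ := hV (ε / 4) (by positivity)
  have hdis : Equiv.Perm.Disjoint (θ * g⁻¹ * θ⁻¹) f := by
    intro z
    by_cases hz : z ∈ V
    · left
      have h1 : θ⁻¹ z ∉ V := fun h => hθV _ h (by simpa using hz)
      have h2 : g⁻¹ (θ⁻¹ z) = θ⁻¹ z := Equiv.Perm.inv_eq_iff_eq.2 (hgV _ h1).symm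
      rw [Equiv.Perm.mul_apply, Equiv.Perm.mul_apply, h2]
      exact θ.apply_symm_apply z
    · exact Or.inr (hfV z hz)
  -- `g' = g (θ g⁻¹ θ⁻¹)` has small norm and the same commutator with `f` as `g`.
  have hg' : HoferLT (ε / 4 + ε / 4) (g * θ * g⁻¹ * θ⁻¹) := (hθ.conj hg).mul hθ.inv
  have h3 := hg'.mul (hg'.inv.conj hf)
  have hc : (θ * g⁻¹ * θ⁻¹) * f = f * (θ * g⁻¹ * θ⁻¹) := hdis.commute.eq
  have h4 : g * θ * g⁻¹ * θ⁻¹ * (f * (g * θ * g⁻¹ * θ⁻¹)⁻¹ * f⁻¹) = g * f * g⁻¹ * f⁻¹ := by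
    calc _ = g * ((θ * g⁻¹ * θ⁻¹) * f) * (θ * g⁻¹ * θ⁻¹)⁻¹ * g⁻¹ * f⁻¹ := by group
      _ = _ := by rw [hc]; group
  rw [h4] at h3
  convert h3 using 1
  ring

/-- A neighbourhood of a point of `R_A` cannot be moved off `A` with arbitrarily small energy,
unless `A` is the whole space. -/
lemma mem_of_ball_displaceable {A : Set (E n)} {p x₀ : E n} (hp : p ∈ rigidLocus n A) {ρ : ℝ}
    (hρ : 0 < ρ) (hU : ∀ ε, 0 < ε → ∃ θ : Equiv.Perm (E n), HoferLT ε θ ∧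
      ∀ z, qn (z - p) < ρ → θ z ∉ A) : x₀ ∈ A := by
  have hpA : p ∈ A := mem_of_hoferLT_all hp (g := 1) fun ε hε => HoferLT.one hε
  by_cases hd : x₀ = p
  · rwa [hd]
  have hVA : ∀ x, qn (x - p) < ρ / 4 → x ∈ A := by
    intro x hx
    by_cases hxp : x = p
    · rwa [hxp]
    obtain ⟨f, -, hf', hfh, h1, -, -, h4⟩ := exists_swap_local hxp
    have := mem_of_displaceable (U := {z | qn (z - p) < ρ}) hp hU hf' hfh
      (fun z hz => h4 z (by rw [mem_ofPred_eq, not_lt] at hz; linarith))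
    rwa [h1] at this
  set d : E n := x₀ - p with hdef
  have hqd : 0 < qn d := qn_pos (sub_ne_zero.2 hd)
  obtain ⟨s, hs0, hs1, hs⟩ : ∃ s : ℝ, 0 < s ∧ s ≤ 1 / 2 ∧ s ^ 2 * qn d < ρ / 16 := by
    refine ⟨min (1 / 2) (ρ / (32 * qn d)), by positivity, min_le_left _ _, ?_⟩
    set s := min (1 / 2) (ρ / (32 * qn d))
    have hs0 : 0 < s := by positivity
    have h1 : s ≤ 1 / 2 := min_le_left _ _
    have h2 : s * (32 * qn d) ≤ ρ := (le_div_iff₀ (by positivity)).1 (min_le_right _ _)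
    nlinarith [mul_pos hs0 hqd]
  have hdne : d ≠ 0 := sub_ne_zero.2 hd
  have hp2 : p + s • d ≠ p := by simp [hdne, hs0.ne']
  have hp3 : p - s • d ≠ p := by simp [hdne, hs0.ne']
  have e2 : qn (p + s • d - p) = s ^ 2 * qn d := by rw [add_sub_cancel_left, qn_smul]
  have e3 : qn (p - s • d - p) = s ^ 2 * qn d := by
    rw [show p - s • d - p = (-s) • d by module, qn_smul]; ring
  obtain ⟨f, hf, -, -, -, f2, -, f4⟩ := exists_swap_local hp3
  obtain ⟨g, hg, -, -, g1, -, g3, g4⟩ := exists_swap_local hp2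
  rw [e3] at f4
  rw [e2] at g3 g4
  have hk : ∀ ε, 0 < ε → HoferLT ε (g * f * g⁻¹ * f⁻¹) := fun ε hε =>
    commutator_hoferLT (V := {z | qn (z - p) < ρ / 4})
      (fun ε hε => by
        obtain ⟨θ, hθ, h⟩ := hU ε hε
        refine ⟨θ, hθ, fun z hz hz' => h z ?_ (hVA _ hz')⟩
        rw [mem_ofPred_eq] at hz
        linarith)
      hf hg (fun z hz => f4 z (by rw [mem_ofPred_eq, not_lt] at hz; linarith))
      (fun z hz => g4 z (by rw [mem_ofPred_eq, not_lt] at hz; linarith)) hε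
  have hg3 : g (p - s • d) = p - s • d := by
    refine g3 _ ?_
    rw [show p - s • d - (1 / 2 : ℝ) • (p + (p + s • d)) = (-(3 / 2) * s) • d by module, qn_smul]
    nlinarith [mul_pos (pow_pos hs0 2) hqd]
  have hkp : (g * f * g⁻¹ * f⁻¹) p = p + s • d := by
    have h1 : f⁻¹ p = p - s • d := Equiv.Perm.inv_eq_iff_eq.2 f2.symm
    have h2 : g⁻¹ (p - s • d) = p - s • d := Equiv.Perm.inv_eq_iff_eq.2 hg3.symm
    simp only [Equiv.Perm.mul_apply, h1, h2, f2, g1]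
  -- With `δ = s |d|²` the point `p` satisfies the condition for being fixed with equality.
  obtain ⟨h, hh, -, -, h1, -, h3⟩ := exists_swap_map (p + s • d) x₀ (δ := s * qn d) (by positivity)
  have hx₀ : x₀ = p + d := by rw [hdef]; abel
  have hhp : h p = p := by
    refine h3 p (le_of_eq ?_)
    rw [hx₀, show p + d - (p + s • d) = (1 - s) • d by module,
      show p - (1 / 2 : ℝ) • (p + s • d + (p + d)) = (-((1 + s) / 2)) • d by module,
      qn_smul, qn_smul]
    ring
  have hfin := mem_of_hoferLT_all hp fun ε hε => (hk ε hε).conj hh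
  have hhp' : h⁻¹ p = p := Equiv.Perm.inv_eq_iff_eq.2 hhp.symm
  rwa [Equiv.Perm.mul_apply, Equiv.Perm.mul_apply, hhp', hkp, h1] at hfin

end rigidity

/-- monotonicity of the rigid locus. -/
theorem rigidLocus_monotone
    (n : ℕ) (hn : 1 ≤ n) (A B : Set (E n)) (hA : IsClosed A) (hB : IsClosed B)
    (hAB : A ⊆ B) :
    rigidLocus n A ⊆ rigidLocus n B := by
  intro p hp
  refine mem_iInter₂.2 fun φ hφ => ?_
  by_contra hpB
  rw [mem_preimage] at hpB
  obtain ⟨hφH, hφS⟩ := hφ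
  have hcont : Continuous φ := by
    obtain ⟨H, Φ, hH, hΦ, rfl⟩ := hφH
    exact hΦ.continuous_one hH
  obtain ⟨r, hr, hball⟩ := Metric.mem_nhds_iff.1
    ((hB.isOpen_compl.preimage hcont).mem_nhds (show p ∈ φ ⁻¹' Bᶜ from hpB))
  obtain ⟨εφ, φe, rfl, hφe⟩ := hamGrp_iff_hoferLT.1 hφH
  refine hpB (hAB (mem_of_ball_displaceable hp (ρ := r ^ 2) (by positivity) fun ε hε => ?_))
  obtain ⟨ψ, ⟨hψH, hψB⟩, χ, hl, -, hlt⟩ := hφS ε hε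
  obtain ⟨εψ, ψe, rfl, hψe⟩ := hamGrp_iff_hoferLT.1 hψH
  have hχ : χ = ⇑ψe⁻¹ := by
    funext z
    have := hl (ψe⁻¹ z)
    rwa [show ψe (ψe⁻¹ z) = z from ψe.apply_symm_apply z] at this
  rw [hχ, ← Equiv.Perm.coe_mul] at hlt
  refine ⟨ψe⁻¹ * φe, hoferLT_of_hoferNorm_lt (hψe.inv.mul hφe).mem hlt, fun z hz hzA => ?_⟩
  have hzr : z ∈ Metric.ball p r := by
    rw [Metric.mem_ball, dist_eq_norm]
    exact lt_of_pow_lt_pow_left₀ 2 hr.le ((norm_sq_le_qn _).trans_lt hz)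
  -- `θ z = ψ⁻¹ (φ z) ∈ A ⊆ B` would put `φ z` in `ψ(B) = B`.
  have h1 : φe z ∈ ψe '' B := ⟨_, hAB hzA, by simp [Equiv.Perm.mul_apply]⟩
  rw [hψB] at h1
  exact hball hzr h1
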